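/- arXiv:2601.19147 — 3 statements merged into one kernel-verified Lean document; each statement's English description precedes it below -/
import Mathlib

section
/- Let W be a rectilinear polygonal environment with free space F, and let s and t be free configurations such that (s,t) is reachable. Then there exists an optimal (s,t)-plan that is both rectilinear and decoupled. -/
open Set
open scoped ENNReal

noncomputable section

/-- The ℓ∞ norm of a point of `ℝ²`. -/
def linf (p : ℝ × ℝ) : ℝ := max |p.1| |p.2|

/-- The ℓ₁ norm of a point of `ℝ²`. -/
def l1 (p : ℝ × ℝ) : ℝ := |p.1| + |p.2|

/-- The Euclidean distance between two points of `ℝ²`. -/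
def euclDist (p q : ℝ × ℝ) : ℝ := Real.sqrt ((p.1 - q.1) ^ 2 + (p.2 - q.2) ^ 2)

/-- A closed axis-aligned rectangle with nonempty interior. -/
def IsClosedAxisRect (S : Set (ℝ × ℝ)) : Prop :=
  ∃ a b c d : ℝ, a < b ∧ c < d ∧ S = Icc a b ×ˢ Icc c d

/-- A rectilinear polygonal environment: a nonempty compact subset of the plane that is a
finite union of closed axis-aligned rectangles with nonempty interior, and that equals the
closure of its interior. -/
def IsRectilinearEnv (W : Set (ℝ × ℝ)) : Prop :=
  W.Nonempty ∧ IsCompact W ∧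
    (∃ 𝓡 : Finset (Set (ℝ × ℝ)), (∀ S ∈ 𝓡, IsClosedAxisRect S) ∧ W = ⋃ S ∈ 𝓡, S) ∧
    W = closure (interior W)

/-- The free space of a workspace `W`: placements of the center of a closed axis-aligned
unit square keeping the square inside `W`. -/
def freeSpace (W : Set (ℝ × ℝ)) : Set (ℝ × ℝ) :=
  {p | ∀ q : ℝ × ℝ, linf q ≤ 1 / 2 → p + q ∈ W}

/-- A free configuration of the two robots. -/
def FreeConf (F : Set (ℝ × ℝ)) (c : (ℝ × ℝ) × (ℝ × ℝ)) : Prop :=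
  c.1 ∈ F ∧ c.2 ∈ F ∧ 1 ≤ linf (c.1 - c.2)

/-- The ℓ₁-length (total variation w.r.t. the metric induced by the ℓ₁-norm) of a planar
path on a set of times. -/
def l1VarOn (γ : ℝ → ℝ × ℝ) (s : Set ℝ) : ℝ≥0∞ :=
  eVariationOn (fun t => (WithLp.equiv 1 (ℝ × ℝ)).symm (γ t)) s

/-- An `(s,t)`-plan: a continuous map on `[0,1]` from `s` to `t`. -/
def IsPlan (s t : (ℝ × ℝ) × (ℝ × ℝ)) (pln : ℝ → (ℝ × ℝ) × (ℝ × ℝ)) : Prop :=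
  ContinuousOn pln (Icc 0 1) ∧ pln 0 = s ∧ pln 1 = t

/-- A plan is feasible if every configuration along it is free. -/
def Feasible (F : Set (ℝ × ℝ)) (pln : ℝ → (ℝ × ℝ) × (ℝ × ℝ)) : Prop :=
  ∀ lam ∈ Icc (0 : ℝ) 1, FreeConf F (pln lam)

/-- The cost of a plan: the sum of the ℓ₁-lengths of the two robot paths. -/
def planCost (pln : ℝ → (ℝ × ℝ) × (ℝ × ℝ)) : ℝ≥0∞ :=
  l1VarOn (fun t => (pln t).1) (Icc 0 1) + l1VarOn (fun t => (pln t).2) (Icc 0 1)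

/-- An optimal `(s,t)`-plan: feasible, and of cost at most that of every feasible plan. -/
def IsOptimalPlan (F : Set (ℝ × ℝ)) (s t : (ℝ × ℝ) × (ℝ × ℝ))
    (pln : ℝ → (ℝ × ℝ) × (ℝ × ℝ)) : Prop :=
  IsPlan s t pln ∧ Feasible F pln ∧
    ∀ pln', IsPlan s t pln' → Feasible F pln' → planCost pln ≤ planCost pln'

/-- A decoupled plan: `[0,1]` splits into finitely many subintervals on each of which
one of the two robots is parked. -/
def IsDecoupled (pln : ℝ → (ℝ × ℝ) × (ℝ × ℝ)) : Prop :=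
  ∃ (n : ℕ) (τ : ℕ → ℝ), τ 0 = 0 ∧ τ n = 1 ∧ (∀ i, i < n → τ i ≤ τ (i + 1)) ∧
    ∀ i, i < n →
      (∀ a ∈ Icc (τ i) (τ (i + 1)), (pln a).1 = (pln (τ i)).1) ∨
      (∀ a ∈ Icc (τ i) (τ (i + 1)), (pln a).2 = (pln (τ i)).2)

/-- A rectilinear path: piecewise linear, with every linear piece horizontal or vertical. -/
def IsRectilinearPath (γ : ℝ → ℝ × ℝ) : Prop :=
  ∃ (n : ℕ) (τ : ℕ → ℝ), τ 0 = 0 ∧ τ n = 1 ∧ (∀ i, i < n → τ i ≤ τ (i + 1)) ∧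
    ∀ i, i < n → ∃ v : ℝ × ℝ, (v.1 = 0 ∨ v.2 = 0) ∧
      ∀ a ∈ Icc (τ i) (τ (i + 1)), γ a = γ (τ i) + (a - τ i) • v

/-- A rectilinear plan: both robot paths are rectilinear. -/
def IsRectilinearPlan (pln : ℝ → (ℝ × ℝ) × (ℝ × ℝ)) : Prop :=
  IsRectilinearPath (fun t => (pln t).1) ∧ IsRectilinearPath (fun t => (pln t).2)

/-- An alternating path: horizontal and vertical pieces (possibly of zero length)
alternate. -/
def IsAlternatingPath (γ : ℝ → ℝ × ℝ) : Prop :=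
  ∃ (n : ℕ) (τ : ℕ → ℝ) (d : ℕ → Bool), τ 0 = 0 ∧ τ n = 1 ∧
    (∀ i, i < n → τ i ≤ τ (i + 1)) ∧
    (∀ i, i + 1 < n → d (i + 1) = !d i) ∧
    ∀ i, i < n → ∃ v : ℝ × ℝ,
      (if d i = true then v.2 = 0 else v.1 = 0) ∧
      ∀ a ∈ Icc (τ i) (τ (i + 1)), γ a = γ (τ i) + (a - τ i) • v

/-- An alternating plan. -/
def IsAlternatingPlan (pln : ℝ → (ℝ × ℝ) × (ℝ × ℝ)) : Prop :=
  IsAlternatingPath (fun t => (pln t).1) ∧ IsAlternatingPath (fun t => (pln t).2)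

/-- `y` is the height of a horizontal edge of `∂F`. -/
def IsHorizEdgeY (F : Set (ℝ × ℝ)) (y : ℝ) : Prop :=
  ∃ a b : ℝ, a < b ∧ (Icc a b ×ˢ ({y} : Set ℝ)) ⊆ frontier F

/-- `x` is the abscissa of a vertical edge of `∂F`. -/
def IsVertEdgeX (F : Set (ℝ × ℝ)) (x : ℝ) : Prop :=
  ∃ a b : ℝ, a < b ∧ (({x} : Set ℝ) ×ˢ Icc a b) ⊆ frontier F

/-- `y` is the height of a horizontal `i`-line for some `i ≤ k` (w.r.t. the free space `F`
and the set `P` of the four source/target points). -/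
def IsHorizLineY (F : Set (ℝ × ℝ)) (P : Set (ℝ × ℝ)) (k : ℕ) (y : ℝ) : Prop :=
  ∃ i : ℕ, i ≤ k ∧
    ((∃ y₀ : ℝ, IsHorizEdgeY F y₀ ∧ |y - y₀| = (i : ℝ)) ∨ ∃ p ∈ P, |y - p.2| = (i : ℝ))

/-- `x` is the abscissa of a vertical `i`-line for some `i ≤ k`. -/
def IsVertLineX (F : Set (ℝ × ℝ)) (P : Set (ℝ × ℝ)) (k : ℕ) (x : ℝ) : Prop :=
  ∃ i : ℕ, i ≤ k ∧
    ((∃ x₀ : ℝ, IsVertEdgeX F x₀ ∧ |x - x₀| = (i : ℝ)) ∨ ∃ p ∈ P, |x - p.1| = (i : ℝ))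

/-- A grid point: a point of `F` lying on a horizontal grid line and a vertical grid line. -/
def IsGridPoint (F : Set (ℝ × ℝ)) (P : Set (ℝ × ℝ)) (u : ℝ × ℝ) : Prop :=
  u ∈ F ∧ IsHorizLineY F P 2 u.2 ∧ IsVertLineX F P 2 u.1

/-- A grid edge: a closed segment in `F` joining two grid points on a common grid line, with
no grid point in its relative interior. -/
def IsGridEdge (F P : Set (ℝ × ℝ)) (u v : ℝ × ℝ) : Prop :=
  IsGridPoint F P u ∧ IsGridPoint F P v ∧ (u.1 = v.1 ∨ u.2 = v.2) ∧
    segment ℝ u v ⊆ F ∧ ∀ w ∈ openSegment ℝ u v, ¬ IsGridPoint F P w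

/-- A vertex of the configuration graph. -/
def ConfVertex (F P : Set (ℝ × ℝ)) (u : (ℝ × ℝ) × (ℝ × ℝ)) : Prop :=
  IsGridPoint F P u.1 ∧ IsGridPoint F P u.2 ∧ 1 ≤ linf (u.1 - u.2)

/-- An edge of the configuration graph. -/
def ConfEdge (F P : Set (ℝ × ℝ)) (u v : (ℝ × ℝ) × (ℝ × ℝ)) : Prop :=
  ConfVertex F P u ∧ ConfVertex F P v ∧
    ((u.1 = v.1 ∧ IsGridEdge F P u.2 v.2) ∨ (u.2 = v.2 ∧ IsGridEdge F P u.1 v.1))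

/-- A path in `S` from `p` to `q`. -/
def IsPathIn (S : Set (ℝ × ℝ)) (p q : ℝ × ℝ) (γ : ℝ → ℝ × ℝ) : Prop :=
  ContinuousOn γ (Icc 0 1) ∧ γ 0 = p ∧ γ 1 = q ∧ ∀ t ∈ Icc (0 : ℝ) 1, γ t ∈ S

/-- The ℓ₁-length of a path parameterized over `[0,1]`. -/
def pathLen (γ : ℝ → ℝ × ℝ) : ℝ≥0∞ := l1VarOn γ (Icc 0 1)

/-- A shortest path in `S` from `p` to `q` (w.r.t. ℓ₁-length). -/
def IsShortestPathIn (S : Set (ℝ × ℝ)) (p q : ℝ × ℝ) (γ : ℝ → ℝ × ℝ) : Prop :=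
  IsPathIn S p q γ ∧ ∀ γ', IsPathIn S p q γ' → pathLen γ ≤ pathLen γ'

/-- An x-monotone path. -/
def XMonotone (γ : ℝ → ℝ × ℝ) : Prop :=
  MonotoneOn (fun t => (γ t).1) (Icc 0 1) ∨ AntitoneOn (fun t => (γ t).1) (Icc 0 1)

/-- A y-monotone path. -/
def YMonotone (γ : ℝ → ℝ × ℝ) : Prop :=
  MonotoneOn (fun t => (γ t).2) (Icc 0 1) ∨ AntitoneOn (fun t => (γ t).2) (Icc 0 1)

/-- An xy-monotone path. -/
def XYMonotone (γ : ℝ → ℝ × ℝ) : Prop := XMonotone γ ∧ YMonotone γ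

/-- The union of the primary horizontal lines (horizontal 0-lines and 1-lines). -/
def primaryHorizSet (F P : Set (ℝ × ℝ)) : Set (ℝ × ℝ) :=
  {p | IsHorizLineY F P 1 p.2}

/-- A corridor: the closure of a connected component of `F` minus the primary horizontal
lines. -/
def IsCorridor (F P : Set (ℝ × ℝ)) (R : Set (ℝ × ℝ)) : Prop :=
  ∃ c ∈ F \ primaryHorizSet F P,
    R = closure (connectedComponentIn (F \ primaryHorizSet F P) c)

/-- `C` is a connected component of `S`. -/
def IsCompOf (S C : Set (ℝ × ℝ)) : Prop := ∃ c ∈ S, C = connectedComponentIn S c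

/-- An x-separated configuration. -/
def XSep (c : (ℝ × ℝ) × (ℝ × ℝ)) : Prop := 1 ≤ |c.1.1 - c.2.1|

/-- A y-separated configuration. -/
def YSep (c : (ℝ × ℝ) × (ℝ × ℝ)) : Prop := 1 ≤ |c.1.2 - c.2.2|

/-- Two configurations have the same x-order. -/
def SameXOrder (c d : (ℝ × ℝ) × (ℝ × ℝ)) : Prop :=
  Real.sign (c.1.1 - c.2.1) = Real.sign (d.1.1 - d.2.1)

/-- Two configurations have the same y-order. -/
def SameYOrder (c d : (ℝ × ℝ) × (ℝ × ℝ)) : Prop :=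
  Real.sign (c.1.2 - c.2.2) = Real.sign (d.1.2 - d.2.2)

/-- During `[a,b]` the path `γ` traverses (affinely) a straight axis-parallel segment
contained in `F` whose endpoints are grid points. -/
def MoveSeg (F P : Set (ℝ × ℝ)) (γ : ℝ → ℝ × ℝ) (a b : ℝ) : Prop :=
  IsGridPoint F P (γ a) ∧ IsGridPoint F P (γ b) ∧
    segment ℝ (γ a) (γ b) ⊆ F ∧
    ∃ v : ℝ × ℝ, (v.1 = 0 ∨ v.2 = 0) ∧ ∀ t ∈ Icc a b, γ t = γ a + (t - a) • v

/-- A canonical-grid plan: a rectilinear decoupled plan that is a finite concatenation of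
moves in each of which one robot is parked at a grid point while the other traverses a
straight axis-parallel segment of the grid contained in `F`; in particular, every
breakpoint of either robot path is a grid point. -/
def IsCanonicalGridPlan (F P : Set (ℝ × ℝ)) (pln : ℝ → (ℝ × ℝ) × (ℝ × ℝ)) : Prop :=
  IsRectilinearPlan pln ∧ IsDecoupled pln ∧
    ∃ (n : ℕ) (τ : ℕ → ℝ), τ 0 = 0 ∧ τ n = 1 ∧ (∀ i, i < n → τ i ≤ τ (i + 1)) ∧
      ∀ i, i < n →
        (IsGridPoint F P (pln (τ i)).1 ∧
            (∀ a ∈ Icc (τ i) (τ (i + 1)), (pln a).1 = (pln (τ i)).1) ∧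
            MoveSeg F P (fun t => (pln t).2) (τ i) (τ (i + 1))) ∨
        (IsGridPoint F P (pln (τ i)).2 ∧
            (∀ a ∈ Icc (τ i) (τ (i + 1)), (pln a).2 = (pln (τ i)).2) ∧
            MoveSeg F P (fun t => (pln t).1) (τ i) (τ (i + 1)))

/-- A path in the configuration graph from `s` to `t` with `k` edges. -/
def IsGraphPath (F P : Set (ℝ × ℝ)) (s t : (ℝ × ℝ) × (ℝ × ℝ)) (k : ℕ)
    (u : ℕ → (ℝ × ℝ) × (ℝ × ℝ)) : Prop :=
  u 0 = s ∧ u k = t ∧ ∀ j, j < k → ConfEdge F P (u j) (u (j + 1))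

/-- The total weight (ℓ₁-distance in `ℝ⁴`) of a path in the configuration graph. -/
def graphPathWeight (k : ℕ) (u : ℕ → (ℝ × ℝ) × (ℝ × ℝ)) : ℝ :=
  ∑ j ∈ Finset.range k, (l1 ((u (j + 1)).1 - (u j).1) + l1 ((u (j + 1)).2 - (u j).2))

/-- `pln` traverses the edges of the graph path `u` one after another (linearly
interpolating along each edge). -/
def IsEdgeTraversal (pln : ℝ → (ℝ × ℝ) × (ℝ × ℝ)) (k : ℕ)
    (u : ℕ → (ℝ × ℝ) × (ℝ × ℝ)) : Prop :=
  (k = 0 → ∀ a ∈ Icc (0 : ℝ) 1, pln a = u 0) ∧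
    ∀ j, j < k → ∀ a ∈ Icc ((j : ℝ) / k) (((j : ℝ) + 1) / k),
      pln a = u j + ((a - (j : ℝ) / k) * k) • (u (j + 1) - u j)

/-- A blocked pair for the corridor `[xlo,xhi] × [ylo,yhi]`. -/
def BlockedPair (F : Set (ℝ × ℝ)) (xlo xhi ylo yhi : ℝ) (u v : ℝ × ℝ) : Prop :=
  ∃ ρ ρ' edge : Set (ℝ × ℝ),
    ((ρ = Ico (xlo - 1) xlo ×ˢ Ico (ylo - 1) ylo ∧
        ρ' = Ico (xlo - 1) xlo ×ˢ Ioc yhi (yhi + 1) ∧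
        edge = ({xlo} : Set ℝ) ×ˢ Icc (ylo - 1) (yhi + 1)) ∨
      (ρ = Ioc xhi (xhi + 1) ×ˢ Ico (ylo - 1) ylo ∧
        ρ' = Ioc xhi (xhi + 1) ×ˢ Ioc yhi (yhi + 1) ∧
        edge = ({xhi} : Set ℝ) ×ˢ Icc (ylo - 1) (yhi + 1))) ∧
    ∃ φ φ' : Set (ℝ × ℝ), IsCompOf (ρ ∩ F) φ ∧ IsCompOf (ρ' ∩ F) φ' ∧
      (closure φ ∩ edge).Nonempty ∧ (closure φ' ∩ edge).Nonempty ∧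
      ((u ∈ φ ∧ v ∈ φ') ∨ (u ∈ φ' ∧ v ∈ φ))

/-- `[ν₁,ν₂] ⊆ [lam1,lam2]` is an unsafe interval for the plan `pln` w.r.t. the influence
region `IR`. -/
def IsUnsafeInterval (IR : Set (ℝ × ℝ)) (pln : ℝ → (ℝ × ℝ) × (ℝ × ℝ))
    (lam1 lam2 ν₁ ν₂ : ℝ) : Prop :=
  lam1 ≤ ν₁ ∧ ν₁ ≤ ν₂ ∧ ν₂ ≤ lam2 ∧
    (∀ ν ∈ Icc ν₁ ν₂, (pln ν).2 ∈ IR ∧ YSep (pln ν)) ∧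
    (∀ a b : ℝ, lam1 ≤ a → a ≤ ν₁ → ν₂ ≤ b → b ≤ lam2 →
      (∀ ν ∈ Icc a b, (pln ν).2 ∈ IR ∧ YSep (pln ν)) → a = ν₁ ∧ b = ν₂) ∧
    ∃ ν ∈ Icc ν₁ ν₂, ¬ XSep (pln ν)

/-! A finite union of products of intervals stays one under complements and Minkowski sums, so the
free space is such a union too. Requiring the robots to lie in given closed boxes and to be
separated in a given one of the four axis directions cuts the set of free configurations into
finitely many convex cells. Inside a cell the robot moving away from the other one can go first,
so any two points of a cell are joined by decoupled rectilinear moves whose total length is their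
ℓ₁-distance. A feasible plan can therefore be replaced, without increasing its cost, by a chain of
boundedly many points, consecutive ones in a common cell; such chains form a closed set on which
length has bounded sublevel sets, so a shortest chain exists, and moving along it is optimal. -/

/-! ### Finite unions of boxes -/

/-- Finite unions of products of convex sets. In the plane these form a Boolean algebra, which is
what makes free spaces accessible: no assumption on endpoints of intervals is needed. -/
inductive IsBoxUnion {E F : Type*} [AddCommGroup E] [Module ℝ E] [AddCommGroup F] [Module ℝ F] :
    Set (E × F) → Prop
  | empty : IsBoxUnion ∅
  | box {I : Set E} {J : Set F} (hI : Convex ℝ I) (hJ : Convex ℝ J) : IsBoxUnion (I ×ˢ J)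
  | union {A B : Set (E × F)} (hA : IsBoxUnion A) (hB : IsBoxUnion B) : IsBoxUnion (A ∪ B)

lemma exists_ordConnected_union_eq_compl {α : Type*} [LinearOrder α] {I : Set α}
    (hI : I.OrdConnected) : ∃ L R : Set α, L.OrdConnected ∧ R.OrdConnected ∧ L ∪ R = Iᶜ := by
  refine ⟨(upperClosure I)ᶜ, (lowerClosure I)ᶜ, (upperClosure I).upper.compl.ordConnected,
    (lowerClosure I).lower.compl.ordConnected, ?_⟩
  rw [← compl_inter, hI.upperClosure_inter_lowerClosure]

namespace IsBoxUnion

section Module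

variable {E F : Type*} [AddCommGroup E] [Module ℝ E] [AddCommGroup F] [Module ℝ F]
  {A B : Set (E × F)}

lemma inter_box (hA : IsBoxUnion A) {I : Set E} {J : Set F} (hI : Convex ℝ I)
    (hJ : Convex ℝ J) : IsBoxUnion (A ∩ I ×ˢ J) := by
  induction hA with
  | empty => simpa only [empty_inter] using empty
  | box hI' hJ' => simpa only [prod_inter_prod] using box (hI'.inter hI) (hJ'.inter hJ)
  | union _ _ ihA ihB => simpa only [union_inter_distrib_right] using ihA.union ihB

lemma inter (hA : IsBoxUnion A) (hB : IsBoxUnion B) : IsBoxUnion (A ∩ B) := by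
  induction hB with
  | empty => simpa only [inter_empty] using empty
  | box hI hJ => exact hA.inter_box hI hJ
  | union _ _ ihB ihC => simpa only [inter_union_distrib_left] using ihB.union ihC

open scoped Pointwise in
lemma sub_box (hA : IsBoxUnion A) {I : Set E} {J : Set F} (hI : Convex ℝ I)
    (hJ : Convex ℝ J) : IsBoxUnion (A - I ×ˢ J) := by
  induction hA with
  | empty => simpa only [empty_sub] using empty
  | box hI' hJ' => simpa only [prod_sub_prod_comm] using box (hI'.sub hI) (hJ'.sub hJ)
  | union _ _ ihA ihB => simpa only [union_sub] using ihA.union ihB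

lemma biUnion_finset {ι : Type*} (I : Finset ι) {A : ι → Set (E × F)}
    (hA : ∀ i ∈ I, IsBoxUnion (A i)) : IsBoxUnion (⋃ i ∈ I, A i) := by
  classical
  induction I using Finset.induction_on with
  | empty => simpa using empty
  | insert i I _ ih =>
    rw [Finset.set_biUnion_insert]
    exact (hA i (I.mem_insert_self i)).union (ih fun j hj => hA j (Finset.mem_insert_of_mem hj))

variable [TopologicalSpace E] [IsTopologicalAddGroup E] [ContinuousSMul ℝ E]
  [TopologicalSpace F] [IsTopologicalAddGroup F] [ContinuousSMul ℝ F]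

lemma exists_closure_eq_biUnion (hA : IsBoxUnion A) :
    ∃ 𝓑 : Set (Set E × Set F), 𝓑.Finite ∧
      (∀ B ∈ 𝓑, Convex ℝ B.1 ∧ Convex ℝ B.2 ∧ IsClosed B.1 ∧ IsClosed B.2) ∧
      closure A = ⋃ B ∈ 𝓑, B.1 ×ˢ B.2 := by
  induction hA with
  | empty => exact ⟨∅, finite_empty, by simp, by simp⟩
  | @box I J hI hJ =>
    refine ⟨{(closure I, closure J)}, finite_singleton _, ?_, ?_⟩
    · rintro _ rfl
      exact ⟨hI.closure, hJ.closure, isClosed_closure, isClosed_closure⟩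
    · rw [biUnion_singleton, closure_prod_eq]
  | union _ _ ihA ihB =>
    obtain ⟨𝓑, h𝓑, hconv, hA⟩ := ihA
    obtain ⟨𝓑', h𝓑', hconv', hB⟩ := ihB
    refine ⟨𝓑 ∪ 𝓑', h𝓑.union h𝓑', ?_, ?_⟩
    · rintro B (hB | hB)
      exacts [hconv B hB, hconv' B hB]
    · rw [closure_union, hA, hB, biUnion_union]

end Module

lemma compl {A : Set (ℝ × ℝ)} (hA : IsBoxUnion A) : IsBoxUnion Aᶜ := by
  induction hA with
  | empty => simpa only [compl_empty, univ_prod_univ] using box convex_univ convex_univ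
  | @box I J hI hJ =>
    obtain ⟨L, R, hL, hR, hLR⟩ := exists_ordConnected_union_eq_compl hI.ordConnected
    obtain ⟨L', R', hL', hR', hLR'⟩ := exists_ordConnected_union_eq_compl hJ.ordConnected
    rw [compl_prod_eq_union, ← hLR, ← hLR', union_prod, prod_union]
    exact ((box hL.convex convex_univ).union (box hR.convex convex_univ)).union
      ((box convex_univ hL'.convex).union (box convex_univ hR'.convex))
  | union _ _ ihA ihB => simpa only [compl_union] using ihA.inter ihB

end IsBoxUnion

/-! ### Free spaces -/

lemma IsRectilinearEnv.isBoxUnion {W : Set (ℝ × ℝ)} (hW : IsRectilinearEnv W) :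
    IsBoxUnion W := by
  obtain ⟨-, -, ⟨𝓡, h𝓡, rfl⟩, -⟩ := hW
  refine IsBoxUnion.biUnion_finset 𝓡 fun S hS => ?_
  obtain ⟨a, b, c, d, -, -, rfl⟩ := h𝓡 S hS
  exact .box (convex_Icc a b) (convex_Icc c d)

lemma setOf_linf_le (r : ℝ) : {q : ℝ × ℝ | linf q ≤ r} = Icc (-r) r ×ˢ Icc (-r) r := by
  ext q
  simp only [linf, mem_ofPred_eq, max_le_iff, abs_le, mem_prod, mem_Icc]

open scoped Pointwise in
lemma compl_freeSpace (W : Set (ℝ × ℝ)) : (freeSpace W)ᶜ = Wᶜ - {q | linf q ≤ 1 / 2} := by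
  ext p
  simp only [freeSpace, mem_compl_iff, mem_ofPred_eq, not_forall, mem_sub]
  constructor
  · rintro ⟨q, hq, hpq⟩
    exact ⟨p + q, hpq, q, hq, add_sub_cancel_right p q⟩
  · rintro ⟨w, hw, q, hq, rfl⟩
    exact ⟨q, hq, by rwa [sub_add_cancel]⟩

lemma IsBoxUnion.freeSpace {W : Set (ℝ × ℝ)} (hW : IsBoxUnion W) : IsBoxUnion (freeSpace W) := by
  rw [← compl_compl (_root_.freeSpace W), compl_freeSpace, setOf_linf_le]
  exact (hW.compl.sub_box (convex_Icc _ _) (convex_Icc _ _)).compl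

lemma isClosed_freeSpace {W : Set (ℝ × ℝ)} (hW : IsClosed W) : IsClosed (freeSpace W) := by
  simp only [freeSpace, ofPred_forall]
  exact isClosed_iInter fun q => isClosed_iInter fun _ => hW.preimage (continuous_add_const q)

/-! ### Moves inside a cell -/

/-- Configurations of the two robots, free or not. -/
abbrev Conf : Type := (ℝ × ℝ) × (ℝ × ℝ)

/-- The ℓ₁-distance between configurations, so that `graphPathWeight k u` is the length of the
chain `u 0, …, u k`. -/
def confDist (u v : Conf) : ℝ := l1 (v.1 - u.1) + l1 (v.2 - u.2)

/-- A move within `S`: one robot is parked while the other translates horizontally or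
vertically. -/
def IsMove (S : Set Conf) (u v : Conf) : Prop :=
  segment ℝ u v ⊆ S ∧
    ((u.1 = v.1 ∧ (u.2.1 = v.2.1 ∨ u.2.2 = v.2.2)) ∨
      (u.2 = v.2 ∧ (u.1.1 = v.1.1 ∨ u.1.2 = v.1.2)))

/-- `MovePath S u v d` means that `v` is reached from `u` by finitely many moves within `S` of
total ℓ₁-length `d`. -/
inductive MovePath (S : Set Conf) (u : Conf) : Conf → ℝ → Prop
  | refl (hu : u ∈ S) : MovePath S u u 0
  | tail {v w : Conf} {d : ℝ} (h : MovePath S u v d) (hvw : IsMove S v w) :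
      MovePath S u w (d + confDist v w)

namespace MovePath

variable {S T : Set Conf} {u v w : Conf} {d e : ℝ}

lemma trans (huv : MovePath S u v d) (hvw : MovePath S v w e) : MovePath S u w (d + e) := by
  induction hvw with
  | refl => rwa [add_zero]
  | tail _ hm ih => rw [← add_assoc]; exact ih.tail hm

lemma mono (hST : S ⊆ T) (h : MovePath S u v d) : MovePath T u v d := by
  induction h with
  | refl hu => exact refl (hST hu)
  | tail _ hm ih => exact ih.tail ⟨hm.1.trans hST, hm.2⟩

lemma exists_seq (h : MovePath S u v d) :
    ∃ (k : ℕ) (q : ℕ → Conf), 0 < k ∧ q 0 = u ∧ q k = v ∧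
      (∀ j < k, IsMove S (q j) (q (j + 1))) ∧ graphPathWeight k q = d := by
  induction h with
  | refl hu =>
    refine ⟨1, fun _ => u, one_pos, rfl, rfl, fun _ _ => ⟨?_, .inl ⟨rfl, .inl rfl⟩⟩, ?_⟩
    · simpa only [segment_same, singleton_subset_iff] using hu
    · simp [graphPathWeight, l1]
  | @tail v w d _ hvw ih =>
    obtain ⟨k, q, hk, h0, hkv, hmove, hd⟩ := ih
    have hq : ∀ j ≤ k, Function.update q (k + 1) w j = q j := fun j hj =>
      Function.update_of_ne (by lia) _ _
    have hlast : Function.update q (k + 1) w (k + 1) = w := Function.update_self _ _ _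
    refine ⟨k + 1, Function.update q (k + 1) w, k.succ_pos, (hq 0 k.zero_le).trans h0, hlast,
      fun j hj => ?_, ?_⟩
    · rcases Nat.lt_succ_iff_lt_or_eq.1 hj with hj | rfl
      · rw [hq j hj.le, hq (j + 1) hj]
        exact hmove j hj
      · rwa [hq j le_rfl, hlast, hkv]
    · rw [graphPathWeight, Finset.sum_range_succ, hq k le_rfl, hlast, hkv, ← hd, confDist,
        graphPathWeight]
      refine congrArg (· + _) (Finset.sum_congr rfl fun j hj => ?_)
      have hj := Finset.mem_range.1 hj
      rw [hq j hj.le, hq (j + 1) hj]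

end MovePath

/-- The signed coordinate functionals. Two unit squares have disjoint interiors iff one of these
functionals separates their centers by at least `1`. -/
def axisFunctionals : Set (ℝ × ℝ →L[ℝ] ℝ) :=
  {.fst ℝ ℝ ℝ, -.fst ℝ ℝ ℝ, .snd ℝ ℝ ℝ, -.snd ℝ ℝ ℝ}

lemma le_linf_iff {r : ℝ} {p : ℝ × ℝ} : r ≤ linf p ↔ ∃ g ∈ axisFunctionals, r ≤ g p := by
  simp [linf, axisFunctionals, le_abs, or_assoc]

lemma axisFunctional_corner {g : ℝ × ℝ →L[ℝ] ℝ} (hg : g ∈ axisFunctionals) (p q : ℝ × ℝ) :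
    g (q.1, p.2) = g p ∨ g (q.1, p.2) = g q := by
  rcases hg with rfl | rfl | rfl | rfl <;> simp

/-- Configurations with the robots in the sets `A` and `B` respectively, the first one ahead of
the second by at least `1` in direction `g`. -/
def sepCell (A B : Set (ℝ × ℝ)) (g : ℝ × ℝ →L[ℝ] ℝ) : Set Conf :=
  {c | c.1 ∈ A ∧ c.2 ∈ B ∧ 1 ≤ g (c.1 - c.2)}

section SepCell

variable {A B : Set (ℝ × ℝ)} {g : ℝ × ℝ →L[ℝ] ℝ}

lemma isClosed_sepCell (hA : IsClosed A) (hB : IsClosed B) : IsClosed (sepCell A B g) :=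
  (hA.preimage continuous_fst).inter <| (hB.preimage continuous_snd).inter <|
    isClosed_Ici.preimage (g.continuous.comp (continuous_fst.sub continuous_snd))

lemma convex_sepCell (hA : Convex ℝ A) (hB : Convex ℝ B) : Convex ℝ (sepCell A B g) :=
  (hA.linear_preimage (.fst ℝ (ℝ × ℝ) (ℝ × ℝ))).inter <|
    (hB.linear_preimage (.snd ℝ (ℝ × ℝ) (ℝ × ℝ))).inter <|
    (convex_Ici (1 : ℝ)).linear_preimage
      (g.toLinearMap ∘ₗ (.fst ℝ (ℝ × ℝ) (ℝ × ℝ) - .snd ℝ (ℝ × ℝ) (ℝ × ℝ)))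

/-- The robot that moves away from the other one in direction `g` can go first. -/
lemma sepCell_exchange {a a' b b' : ℝ × ℝ} (h : (a, b) ∈ sepCell A B g)
    (h' : (a', b') ∈ sepCell A B g) : (a', b) ∈ sepCell A B g ∨ (a, b') ∈ sepCell A B g := by
  obtain ⟨ha, hb, hab⟩ := h
  obtain ⟨ha', hb', hab'⟩ := h'
  simp only [map_sub] at hab hab'
  rcases le_total (g a) (g a') with hle | hle
  · exact .inl ⟨ha', hb, by simp only [map_sub]; linarith⟩
  · exact .inr ⟨ha, hb', by simp only [map_sub]; linarith⟩

variable {I J I' J' : Set ℝ} (hI : Convex ℝ I) (hJ : Convex ℝ J) (hI' : Convex ℝ I')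
  (hJ' : Convex ℝ J') (hg : g ∈ axisFunctionals)

include hI hJ hI' hJ' hg

lemma movePath_sepCell_of_snd_eq {a a' b : ℝ × ℝ} (h : (a, b) ∈ sepCell (I ×ˢ J) (I' ×ˢ J') g)
    (h' : (a', b) ∈ sepCell (I ×ˢ J) (I' ×ˢ J') g) :
    MovePath (sepCell (I ×ˢ J) (I' ×ˢ J') g) (a, b) (a', b) (l1 (a' - a)) := by
  have hconv := convex_sepCell (g := g) (hI.prod hJ) (hI'.prod hJ')
  have hcorner : ((a'.1, a.2), b) ∈ sepCell (I ×ˢ J) (I' ×ˢ J') g := by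
    refine ⟨⟨h'.1.1, h.1.2⟩, h.2.1, ?_⟩
    rw [map_sub]
    rcases axisFunctional_corner hg a a' with hga | hga <;> rw [hga, ← map_sub]
    exacts [h.2.2, h'.2.2]
  convert ((MovePath.refl h).tail ⟨hconv.segment_subset h hcorner, .inr ⟨rfl, .inr rfl⟩⟩).tail
    ⟨hconv.segment_subset hcorner h', .inr ⟨rfl, .inl rfl⟩⟩ using 1
  simp [confDist, l1]

lemma movePath_sepCell_of_fst_eq {a b b' : ℝ × ℝ} (h : (a, b) ∈ sepCell (I ×ˢ J) (I' ×ˢ J') g)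
    (h' : (a, b') ∈ sepCell (I ×ˢ J) (I' ×ˢ J') g) :
    MovePath (sepCell (I ×ˢ J) (I' ×ˢ J') g) (a, b) (a, b') (l1 (b' - b)) := by
  have hconv := convex_sepCell (g := g) (hI.prod hJ) (hI'.prod hJ')
  have hcorner : (a, (b'.1, b.2)) ∈ sepCell (I ×ˢ J) (I' ×ˢ J') g := by
    refine ⟨h.1, ⟨h'.2.1.1, h.2.1.2⟩, ?_⟩
    rw [map_sub]
    rcases axisFunctional_corner hg b b' with hgb | hgb <;> rw [hgb, ← map_sub]
    exacts [h.2.2, h'.2.2]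
  convert ((MovePath.refl h).tail ⟨hconv.segment_subset h hcorner, .inl ⟨rfl, .inr rfl⟩⟩).tail
    ⟨hconv.segment_subset hcorner h', .inl ⟨rfl, .inl rfl⟩⟩ using 1
  simp [confDist, l1]

lemma movePath_sepCell {x y : Conf} (hx : x ∈ sepCell (I ×ˢ J) (I' ×ˢ J') g)
    (hy : y ∈ sepCell (I ×ˢ J) (I' ×ˢ J') g) :
    MovePath (sepCell (I ×ˢ J) (I' ×ˢ J') g) x y (confDist x y) := by
  rcases sepCell_exchange hx hy with hmid | hmid
  · exact (movePath_sepCell_of_snd_eq hI hJ hI' hJ' hg hx hmid).trans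
      (movePath_sepCell_of_fst_eq hI hJ hI' hJ' hg hmid hy)
  · rw [confDist, add_comm]
    exact (movePath_sepCell_of_fst_eq hI hJ hI' hJ' hg hx hmid).trans
      (movePath_sepCell_of_snd_eq hI hJ hI' hJ' hg hmid hy)

end SepCell

/-- A closed set of configurations in which any two points are joined by moves whose total length
is their ℓ₁-distance. -/
def IsGeodesicCell (C : Set Conf) : Prop :=
  IsClosed C ∧ ∀ x ∈ C, ∀ y ∈ C, MovePath C x y (confDist x y)

lemma freeConf_biUnion_iff {𝓑 : Set (Set ℝ × Set ℝ)} {c : Conf} :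
    FreeConf (⋃ B ∈ 𝓑, B.1 ×ˢ B.2) c ↔ ∃ A ∈ 𝓑, ∃ B ∈ 𝓑, ∃ g ∈ axisFunctionals,
      c ∈ sepCell (A.1 ×ˢ A.2) (B.1 ×ˢ B.2) g := by
  simp only [FreeConf, le_linf_iff, sepCell, mem_iUnion₂, exists_prop, mem_ofPred_eq]
  constructor
  · rintro ⟨⟨A, hA, hcA⟩, ⟨B, hB, hcB⟩, g, hg, hc⟩
    exact ⟨A, hA, B, hB, g, hg, hcA, hcB, hc⟩
  · rintro ⟨A, hA, B, hB, g, hg, hcA, hcB, hc⟩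
    exact ⟨⟨A, hA, hcA⟩, ⟨B, hB, hcB⟩, g, hg, hc⟩

lemma exists_finite_geodesicCells {F : Set (ℝ × ℝ)} (hF : IsBoxUnion F) (hFc : IsClosed F) :
    ∃ 𝒞 : Set (Set Conf), 𝒞.Finite ∧ (∀ C ∈ 𝒞, IsGeodesicCell C) ∧
      {c | FreeConf F c} = ⋃₀ 𝒞 := by
  obtain ⟨𝓑, h𝓑, hbox, hF⟩ := hF.exists_closure_eq_biUnion
  rw [hFc.closure_eq] at hF
  subst hF
  have hfin : axisFunctionals.Finite := toFinite {_, _, _, _}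
  refine ⟨(fun z => sepCell (z.1.1 ×ˢ z.1.2) (z.2.1.1 ×ˢ z.2.1.2) z.2.2) ''
    (𝓑 ×ˢ 𝓑 ×ˢ axisFunctionals), (h𝓑.prod (h𝓑.prod hfin)).image _, ?_, ?_⟩
  · rintro _ ⟨⟨A, B, g⟩, ⟨hA, hB, hg⟩, rfl⟩
    obtain ⟨hA₁, hA₂, hA₁c, hA₂c⟩ := hbox A hA
    obtain ⟨hB₁, hB₂, hB₁c, hB₂c⟩ := hbox B hB
    exact ⟨isClosed_sepCell (hA₁c.prod hA₂c) (hB₁c.prod hB₂c),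
      fun x hx y hy => movePath_sepCell hA₁ hA₂ hB₁ hB₂ hg hx hy⟩
  · ext c
    simp only [mem_ofPred_eq, freeConf_biUnion_iff, mem_sUnion, mem_image, mem_prod]
    constructor
    · rintro ⟨A, hA, B, hB, g, hg, hc⟩
      exact ⟨_, ⟨(A, B, g), ⟨hA, hB, hg⟩, rfl⟩, hc⟩
    · rintro ⟨_, ⟨⟨A, B, g⟩, ⟨hA, hB, hg⟩, rfl⟩, hc⟩
      exact ⟨A, hA, B, hB, g, hg, hc⟩

/-! ### Chains of linked points -/

lemma exists_monotone_seq_of_isClosed_cover {α ι : Type*} [ConditionallyCompleteLinearOrder α]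
    [DenselyOrdered α] [TopologicalSpace α] [OrderTopology α] {C : ι → Set α} (I : Finset ι)
    {a b : α} (hab : a ≤ b) (hC : ∀ i ∈ I, IsClosed (C i)) (hcover : Icc a b ⊆ ⋃ i ∈ I, C i) :
    ∃ τ : ℕ → α, Monotone τ ∧ τ 0 = a ∧ (∀ k, I.card ≤ k → τ k = b) ∧
      ∀ k, ∃ i ∈ I, τ k ∈ C i ∧ τ (k + 1) ∈ C i := by
  classical
  induction I using Finset.strongInduction generalizing a with
  | H I ih =>
  obtain ⟨i, hi, hai⟩ := mem_iUnion₂.1 (hcover (left_mem_Icc.2 hab))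
  -- Follow the member containing `a` up to its last point; it is never needed again afterwards.
  obtain ⟨m, ⟨⟨ham, hmb⟩, hmi⟩, hmax⟩ := (isCompact_Icc.inter_right (hC i hi)).exists_isGreatest
    ⟨a, left_mem_Icc.2 hab, hai⟩
  obtain ⟨τ, hτ, hτ0, hτb, hlink⟩ : ∃ τ : ℕ → α, Monotone τ ∧ τ 0 = m ∧
      (∀ k, I.card ≤ k + 1 → τ k = b) ∧ ∀ k, ∃ i ∈ I, τ k ∈ C i ∧ τ (k + 1) ∈ C i := by
    rcases hmb.eq_or_lt with rfl | hmb
    · exact ⟨fun _ => m, monotone_const, rfl, fun _ _ => rfl, fun _ => ⟨i, hi, hmi, hmi⟩⟩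
    have hC' : ∀ j ∈ I.erase i, IsClosed (C j) := fun j hj => hC j (Finset.mem_of_mem_erase hj)
    have hcover' : Icc m b ⊆ ⋃ j ∈ I.erase i, C j := by
      rw [← closure_Ioc hmb.ne]
      refine closure_minimal (fun x hx => ?_) (isClosed_biUnion_finset hC')
      have hxab : x ∈ Icc a b := ⟨ham.trans hx.1.le, hx.2⟩
      obtain ⟨j, hj, hxj⟩ := mem_iUnion₂.1 (hcover hxab)
      refine mem_biUnion (Finset.mem_erase.2 ⟨?_, hj⟩) hxj
      rintro rfl
      exact hx.1.not_ge (hmax ⟨hxab, hxj⟩)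
    obtain ⟨τ, hτ, hτ0, hτb, hlink⟩ := ih _ (Finset.erase_ssubset hi) hmb.le hC' hcover'
    refine ⟨τ, hτ, hτ0, fun k hk => hτb k ?_, fun k => ?_⟩
    · rw [Finset.card_erase_of_mem hi]
      lia
    · obtain ⟨j, hj, hjk⟩ := hlink k
      exact ⟨j, Finset.mem_of_mem_erase hj, hjk⟩
  refine ⟨fun k => k.casesOn a τ, monotone_nat_of_le_succ ?_, rfl, ?_, ?_⟩
  · rintro (_ | k)
    exacts [ham.trans_eq hτ0.symm, hτ k.le_succ]
  · rintro (_ | k) hk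
    · exact absurd hi (by simp [Finset.card_eq_zero.1 (Nat.le_zero.1 hk)])
    · exact hτb k hk
  · rintro (_ | k)
    exacts [⟨i, hi, hai, (congrArg (· ∈ C i) hτ0).mpr hmi⟩, hlink k]

/-- A chain from `x` to `y` of at most `n` steps, consecutive points of which lie in a common
member of the family `𝒞`. It is extended by `y` beyond index `n`, so that chains form a subset of
the product space `ℕ → X`. -/
def IsLinkedChain {X : Type*} (𝒞 : Set (Set X)) (n : ℕ) (x y : X) (p : ℕ → X) : Prop :=
  p 0 = x ∧ (∀ k, n ≤ k → p k = y) ∧ ∀ k, ∃ C ∈ 𝒞, p k ∈ C ∧ p (k + 1) ∈ C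

lemma exists_isLinkedChain_comp {α X : Type*} [ConditionallyCompleteLinearOrder α]
    [DenselyOrdered α] [TopologicalSpace α] [OrderTopology α] [TopologicalSpace X]
    {𝒞 : Set (Set X)} (h𝒞 : 𝒞.Finite) (hclosed : ∀ C ∈ 𝒞, IsClosed C) {γ : α → X} {a b : α}
    (hab : a ≤ b) (hγ : ContinuousOn γ (Icc a b)) (hcover : MapsTo γ (Icc a b) (⋃₀ 𝒞)) :
    ∃ τ : ℕ → α, Monotone τ ∧ (∀ k, τ k ∈ Icc a b) ∧
      IsLinkedChain 𝒞 𝒞.ncard (γ a) (γ b) (γ ∘ τ) := by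
  obtain ⟨τ, hτ, hτ0, hτb, hlink⟩ := exists_monotone_seq_of_isClosed_cover
    (C := fun C => Icc a b ∩ γ ⁻¹' C) h𝒞.toFinset hab
    (fun C hC => hγ.preimage_isClosed_of_isClosed isClosed_Icc (hclosed C (by simpa using hC)))
    (fun t ht => by simpa [ht.1, ht.2] using hcover ht)
  rw [← ncard_eq_toFinset_card _ h𝒞] at hτb
  refine ⟨τ, hτ, fun k => ?_, congrArg γ hτ0, fun k hk => congrArg γ (hτb k hk), fun k => ?_⟩
  · obtain ⟨C, -, hk, -⟩ := hlink k
    exact hk.1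
  · obtain ⟨C, hC, hk, hk'⟩ := hlink k
    exact ⟨C, h𝒞.mem_toFinset.1 hC, hk.2, hk'.2⟩

lemma isClosed_setOf_isLinkedChain {X : Type*} [TopologicalSpace X] [T1Space X]
    {𝒞 : Set (Set X)} (h𝒞 : 𝒞.Finite) (hclosed : ∀ C ∈ 𝒞, IsClosed C) (n : ℕ) (x y : X) :
    IsClosed {p | IsLinkedChain 𝒞 n x y p} := by
  have hfirst : IsClosed {p : ℕ → X | p 0 = x} := isClosed_singleton.preimage (continuous_apply 0)
  have hlast : IsClosed {p : ℕ → X | ∀ k, n ≤ k → p k = y} := by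
    simp only [ofPred_forall]
    exact isClosed_iInter fun k => isClosed_iInter fun _ =>
      isClosed_singleton.preimage (continuous_apply k)
  have hlink : IsClosed {p : ℕ → X | ∀ k, ∃ C ∈ 𝒞, p k ∈ C ∧ p (k + 1) ∈ C} := by
    have heq : {p : ℕ → X | ∀ k, ∃ C ∈ 𝒞, p k ∈ C ∧ p (k + 1) ∈ C} =
        ⋂ k, ⋃ C ∈ 𝒞, {p | p k ∈ C ∧ p (k + 1) ∈ C} := by
      ext p
      simp only [mem_ofPred_eq, mem_iInter, mem_iUnion, exists_prop]
    rw [heq]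
    exact isClosed_iInter fun k => h𝒞.isClosed_biUnion fun C hC =>
      ((hclosed C hC).preimage (continuous_apply k)).inter
        ((hclosed C hC).preimage (continuous_apply (k + 1)))
  exact hfirst.inter (hlast.inter hlink)

section Minimal

variable {X : Type*} [MetricSpace X] {𝒞 : Set (Set X)} {n : ℕ} {x y : X} {w : X → X → ℝ}

lemma IsLinkedChain.dist_le_sum {p : ℕ → X} (hp : IsLinkedChain 𝒞 n x y p)
    (hw : ∀ x y, dist x y ≤ w x y) (k : ℕ) :
    dist (p k) x ≤ ∑ i ∈ Finset.range n, w (p i) (p (i + 1)) := by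
  have hmin : p k = p (min k n) := by
    rcases le_total k n with hk | hk
    · rw [min_eq_left hk]
    · rw [min_eq_right hk, hp.2.1 k hk, hp.2.1 n le_rfl]
  calc dist (p k) x = dist (p 0) (p (min k n)) := by rw [hmin, dist_comm, hp.1]
    _ ≤ ∑ i ∈ Finset.range (min k n), dist (p i) (p (i + 1)) := dist_le_range_sum_dist p _
    _ ≤ ∑ i ∈ Finset.range n, dist (p i) (p (i + 1)) :=
      Finset.sum_le_sum_of_subset_of_nonneg (Finset.range_mono (min_le_right k n))
        fun _ _ _ => dist_nonneg
    _ ≤ ∑ i ∈ Finset.range n, w (p i) (p (i + 1)) := Finset.sum_le_sum fun _ _ => hw _ _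

lemma exists_isLinkedChain_forall_sum_le [ProperSpace X] (h𝒞 : 𝒞.Finite)
    (hclosed : ∀ C ∈ 𝒞, IsClosed C) (hwc : Continuous (Function.uncurry w))
    (hw : ∀ x y, dist x y ≤ w x y) (hex : ∃ p, IsLinkedChain 𝒞 n x y p) :
    ∃ p, IsLinkedChain 𝒞 n x y p ∧ ∀ p', IsLinkedChain 𝒞 n x y p' →
      ∑ i ∈ Finset.range n, w (p i) (p (i + 1)) ≤
        ∑ i ∈ Finset.range n, w (p' i) (p' (i + 1)) := by
  obtain ⟨p₀, hp₀⟩ := hex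
  let len : (ℕ → X) → ℝ := fun p => ∑ i ∈ Finset.range n, w (p i) (p (i + 1))
  have hstep (i : ℕ) : Continuous fun p : ℕ → X => (p i, p (i + 1)) :=
    (continuous_apply i).prodMk (continuous_apply (i + 1))
  have hlen : Continuous len := continuous_finsetSum _ fun i _ => hwc.comp (hstep i)
  have hball : IsCompact (univ.pi fun _ : ℕ => Metric.closedBall x (len p₀)) :=
    isCompact_univ_pi fun _ => isCompact_closedBall x _
  have hlarge : ∀ᶠ p in Filter.cocompact (ℕ → X) ⊓ Filter.principal {p | IsLinkedChain 𝒞 n x y p},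
      len p₀ ≤ len p := by
    refine Filter.eventually_inf_principal.2 ?_
    filter_upwards [hball.compl_mem_cocompact] with p hfar hp
    by_contra! hlt
    exact hfar fun k _ => (hp.dist_le_sum hw k).trans hlt.le
  obtain ⟨p, hp, hmin⟩ := hlen.continuousOn.exists_isMinOn'
    (isClosed_setOf_isLinkedChain h𝒞 hclosed n x y) hp₀ hlarge
  exact ⟨p, hp, fun p' hp' => hmin hp'⟩

end Minimal

/-! ### Edge traversals -/

section Polyline

variable {E : Type*} [AddCommGroup E] [Module ℝ E] {u : ℕ → E} {k : ℕ}

/-- The path through `u 0, …, u k` at the times `0, …, k`, affine in between; the `i`-th summand is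
the part of the `i`-th edge already traversed at time `x`. -/
def polyline (u : ℕ → E) (k : ℕ) (x : ℝ) : E :=
  u 0 + ∑ i ∈ Finset.range k, (projIcc (0 : ℝ) 1 zero_le_one (x - i) : ℝ) • (u (i + 1) - u i)

lemma continuous_polyline [TopologicalSpace E] [ContinuousAdd E] [ContinuousSMul ℝ E] :
    Continuous (polyline u k) :=
  continuous_const.add <| continuous_finsetSum _ fun _ _ =>
    (continuous_subtype_val.comp
      (continuous_projIcc.comp (continuous_id.sub continuous_const))).smul continuous_const

lemma polyline_eq_add_smul {j : ℕ} (hj : j < k) {x : ℝ} (hx : x ∈ Icc (j : ℝ) (j + 1)) :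
    polyline u k x = u j + (x - j) • (u (j + 1) - u j) := by
  have hdone : ∀ i ∈ Finset.range j,
      (projIcc (0 : ℝ) 1 zero_le_one (x - i) : ℝ) • (u (i + 1) - u i) = u (i + 1) - u i := by
    intro i hi
    have hij : (i : ℝ) + 1 ≤ j := by exact_mod_cast Finset.mem_range.1 hi
    rw [projIcc_of_right_le _ (by linarith [hx.1]), one_smul]
  have hfuture : ∀ i ∈ Finset.range k, i ∉ Finset.range (j + 1) →
      (projIcc (0 : ℝ) 1 zero_le_one (x - i) : ℝ) • (u (i + 1) - u i) = 0 := by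
    intro i _ hi
    have hji : (j : ℝ) + 1 ≤ i := by exact_mod_cast not_lt.1 (mt Finset.mem_range.2 hi)
    rw [projIcc_of_le_left _ (by linarith [hx.2]), zero_smul]
  have hcurrent : x - j ∈ Icc (0 : ℝ) 1 := ⟨by linarith [hx.1], by linarith [hx.2]⟩
  rw [polyline, ← Finset.sum_subset (Finset.range_mono hj) hfuture, Finset.sum_range_succ,
    Finset.sum_congr rfl hdone, Finset.sum_range_sub, projIcc_of_mem _ hcurrent]
  abel

end Polyline

lemma monotone_natCast_div (k : ℕ) : Monotone fun j : ℕ => (j : ℝ) / k :=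
  Nat.mono_cast.div_const k.cast_nonneg

lemma exists_lt_mem_Icc_div {k : ℕ} (hk : 0 < k) {a : ℝ} (ha : a ∈ Icc (0 : ℝ) 1) :
    ∃ j < k, a ∈ Icc ((j : ℝ) / k) ((j + 1) / k) := by
  have hk' : (0 : ℝ) < k := Nat.cast_pos.2 hk
  rcases ha.2.eq_or_lt with rfl | ha1
  · obtain ⟨j, rfl⟩ := Nat.exists_eq_add_one.2 hk
    refine ⟨j, j.lt_succ_self, div_le_one_of_le₀ ?_ hk'.le, ?_⟩
    · exact_mod_cast j.le_succ
    · exact (one_le_div hk').2 (by push_cast; rfl)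
  · refine ⟨⌊a * k⌋₊, ?_, ?_, ?_⟩
    · exact (Nat.floor_lt (mul_nonneg ha.1 hk'.le)).2 (mul_lt_of_lt_one_left hk' ha1)
    · exact (div_le_iff₀ hk').2 (Nat.floor_le (mul_nonneg ha.1 hk'.le))
    · exact (le_div_iff₀ hk').2 (Nat.lt_floor_add_one _).le

lemma exists_continuous_isEdgeTraversal (u : ℕ → Conf) (k : ℕ) :
    ∃ pln, Continuous pln ∧ IsEdgeTraversal pln k u := by
  refine ⟨fun a => polyline u k (a * k), continuous_polyline.comp (by fun_prop), ?_, ?_⟩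
  · rintro rfl a -
    simp [polyline]
  · intro j hj a ha
    have hk : (0 : ℝ) < k := Nat.cast_pos.2 (j.zero_le.trans_lt hj)
    have hak : a * k ∈ Icc (j : ℝ) (j + 1) :=
      ⟨(div_le_iff₀ hk).1 ha.1, (le_div_iff₀ hk).1 ha.2⟩
    simp only [polyline_eq_add_smul hj hak, sub_mul, div_mul_cancel₀ _ hk.ne']

lemma edist_toLp_one (p q : ℝ × ℝ) :
    edist (WithLp.toLp 1 p) (WithLp.toLp 1 q) = ENNReal.ofReal (l1 (p - q)) := by
  rw [edist_dist, WithLp.prod_dist_eq_of_L1]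
  rfl

lemma l1_smul (r : ℝ) (v : ℝ × ℝ) : l1 (r • v) = |r| * l1 v := by
  simp only [l1, Prod.smul_fst, Prod.smul_snd, smul_eq_mul, abs_mul, mul_add]

lemma l1_nonneg (v : ℝ × ℝ) : 0 ≤ l1 v := add_nonneg (abs_nonneg _) (abs_nonneg _)

lemma l1VarOn_le_of_eq_add_smul {γ : ℝ → ℝ × ℝ} {p v : ℝ × ℝ} {α β : ℝ} (hαβ : α ≤ β)
    (hγ : ∀ a ∈ Icc α β, γ a = p + (a - α) • v) :
    l1VarOn γ (Icc α β) ≤ ENNReal.ofReal ((β - α) * l1 v) := by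
  have hlip : LipschitzOnWith (l1 v).toNNReal (fun a => WithLp.toLp 1 (γ a)) (Icc α β) := by
    intro a ha b hb
    have hsub : γ a - γ b = (a - b) • v := by rw [hγ a ha, hγ b hb]; module
    rw [edist_toLp_one, hsub, l1_smul, mul_comm, ENNReal.ofReal_mul (l1_nonneg v), edist_dist,
      Real.dist_eq]
    rfl
  have hid : eVariationOn id (Icc α β) = ENNReal.ofReal (β - α) := by
    simpa only [inter_self, id_eq] using
      monotoneOn_id.eVariationOn_eq (left_mem_Icc.2 hαβ) (right_mem_Icc.2 hαβ)
  calc l1VarOn γ (Icc α β) ≤ (l1 v).toNNReal * eVariationOn id (Icc α β) :=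
        hlip.comp_eVariationOn_le (mapsTo_id _)
    _ = ENNReal.ofReal ((β - α) * l1 v) := by
        rw [hid, mul_comm, ENNReal.ofReal_mul (sub_nonneg.2 hαβ)]
        rfl

lemma ofReal_graphPathWeight (k : ℕ) (u : ℕ → Conf) :
    ENNReal.ofReal (graphPathWeight k u) =
      ∑ j ∈ Finset.range k, ENNReal.ofReal (l1 ((u (j + 1)).1 - (u j).1)) +
        ∑ j ∈ Finset.range k, ENNReal.ofReal (l1 ((u (j + 1)).2 - (u j).2)) := by
  rw [graphPathWeight, Finset.sum_add_distrib,
    ENNReal.ofReal_add (Finset.sum_nonneg fun _ _ => l1_nonneg _)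
      (Finset.sum_nonneg fun _ _ => l1_nonneg _),
    ENNReal.ofReal_sum_of_nonneg fun _ _ => l1_nonneg _,
    ENNReal.ofReal_sum_of_nonneg fun _ _ => l1_nonneg _]

lemma sum_ofReal_l1_le_l1VarOn (γ : ℝ → ℝ × ℝ) {I : Set ℝ} {τ : ℕ → ℝ} (hτ : Monotone τ)
    (hI : ∀ k, τ k ∈ I) (n : ℕ) :
    ∑ i ∈ Finset.range n, ENNReal.ofReal (l1 (γ (τ (i + 1)) - γ (τ i))) ≤ l1VarOn γ I := by
  simp only [← edist_toLp_one]
  exact eVariationOn.sum_le hτ hI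

lemma ofReal_graphPathWeight_comp_le_planCost (pln : ℝ → Conf) {τ : ℕ → ℝ} (hτ : Monotone τ)
    (hmem : ∀ k, τ k ∈ Icc (0 : ℝ) 1) (n : ℕ) :
    ENNReal.ofReal (graphPathWeight n (pln ∘ τ)) ≤ planCost pln := by
  rw [ofReal_graphPathWeight]
  exact add_le_add (sum_ofReal_l1_le_l1VarOn (fun a => (pln a).1) hτ hmem n)
    (sum_ofReal_l1_le_l1VarOn (fun a => (pln a).2) hτ hmem n)

namespace IsEdgeTraversal

variable {pln : ℝ → Conf} {k : ℕ} {u : ℕ → Conf} {F : Set (ℝ × ℝ)}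

lemma apply_div (h : IsEdgeTraversal pln k u) {j : ℕ} (hj : j < k) : pln ((j : ℝ) / k) = u j := by
  rw [h.2 j hj _ ⟨le_rfl, by gcongr; linarith⟩, sub_self, zero_mul, zero_smul, add_zero]

lemma apply_one (h : IsEdgeTraversal pln k u) (hk : 0 < k) : pln 1 = u k := by
  obtain ⟨j, rfl⟩ := Nat.exists_eq_add_one.2 hk
  have hj : ((j : ℝ) + 1) ≠ 0 := by positivity
  have hlast := h.2 j j.lt_succ_self 1
  push_cast at hlast
  rw [hlast ⟨(div_le_one₀ (by positivity)).2 (by linarith), (div_self hj).ge⟩, sub_mul,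
    div_mul_cancel₀ _ hj, one_mul, add_sub_cancel_left, one_smul, add_sub_cancel]

lemma apply_zero (h : IsEdgeTraversal pln k u) (hk : 0 < k) : pln 0 = u 0 := by
  simpa only [Nat.cast_zero, zero_div] using h.apply_div hk

lemma eq_add_smul (h : IsEdgeTraversal pln k u) {j : ℕ} (hj : j < k) {a : ℝ}
    (ha : a ∈ Icc ((j : ℝ) / k) ((j + 1) / k)) :
    pln a = pln ((j : ℝ) / k) + (a - (j : ℝ) / k) • ((k : ℝ) • (u (j + 1) - u j)) := by
  rw [h.2 j hj a ha, h.apply_div hj, smul_smul]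

lemma apply_mem_segment (h : IsEdgeTraversal pln k u) {j : ℕ} (hj : j < k) {a : ℝ}
    (ha : a ∈ Icc ((j : ℝ) / k) ((j + 1) / k)) : pln a ∈ segment ℝ (u j) (u (j + 1)) := by
  have hk : (0 : ℝ) < k := Nat.cast_pos.2 (j.zero_le.trans_lt hj)
  rw [segment_eq_image', h.2 j hj a ha]
  refine mem_image_of_mem _ ⟨mul_nonneg (sub_nonneg.2 ha.1) hk.le, ?_⟩
  rw [sub_mul, div_mul_cancel₀ _ hk.ne']
  linarith [(le_div_iff₀ hk).1 ha.2]

lemma feasible (h : IsEdgeTraversal pln k u) (hk : 0 < k)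
    (hmove : ∀ j < k, IsMove {c | FreeConf F c} (u j) (u (j + 1))) : Feasible F pln := by
  intro a ha
  obtain ⟨j, hj, haj⟩ := exists_lt_mem_Icc_div hk ha
  exact (hmove j hj).1 (h.apply_mem_segment hj haj)

lemma isRectilinearPath_comp (h : IsEdgeTraversal pln k u) (hk : 0 < k)
    (π : Conf →ₗ[ℝ] ℝ × ℝ)
    (haxis : ∀ j < k, (π (u (j + 1) - u j)).1 = 0 ∨ (π (u (j + 1) - u j)).2 = 0) :
    IsRectilinearPath (π ∘ pln) := by
  refine ⟨k, fun j => j / k, by simp, div_self (Nat.cast_ne_zero.2 hk.ne'), 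
    fun j _ => monotone_natCast_div k j.le_succ,
    fun j hj => ⟨(k : ℝ) • π (u (j + 1) - u j), ?_, fun a ha => ?_⟩⟩
  · exact (haxis j hj).imp (fun h0 => by rw [Prod.smul_fst, h0, smul_zero])
      fun h0 => by rw [Prod.smul_snd, h0, smul_zero]
  · push_cast at ha
    simp only [Function.comp_apply, h.eq_add_smul hj ha, map_add, map_smul]

lemma isRectilinearPlan {S : Set Conf} (h : IsEdgeTraversal pln k u) (hk : 0 < k)
    (hmove : ∀ j < k, IsMove S (u j) (u (j + 1))) : IsRectilinearPlan pln := by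
  refine ⟨h.isRectilinearPath_comp hk (.fst ℝ (ℝ × ℝ) (ℝ × ℝ)) fun j hj => ?_,
    h.isRectilinearPath_comp hk (.snd ℝ (ℝ × ℝ) (ℝ × ℝ)) fun j hj => ?_⟩
  · rcases (hmove j hj).2 with ⟨h1, -⟩ | ⟨-, h1⟩
    · simp [h1]
    · exact h1.imp (fun h0 => by simp [h0]) fun h0 => by simp [h0]
  · rcases (hmove j hj).2 with ⟨-, h2⟩ | ⟨h2, -⟩
    · exact h2.imp (fun h0 => by simp [h0]) fun h0 => by simp [h0]
    · simp [h2]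

lemma isDecoupled {S : Set Conf} (h : IsEdgeTraversal pln k u) (hk : 0 < k)
    (hmove : ∀ j < k, IsMove S (u j) (u (j + 1))) : IsDecoupled pln := by
  refine ⟨k, fun j => j / k, by simp, div_self (Nat.cast_ne_zero.2 hk.ne'), 
    fun j _ => monotone_natCast_div k j.le_succ, fun j hj => ?_⟩
  push_cast
  rcases (hmove j hj).2 with ⟨h1, -⟩ | ⟨h2, -⟩
  · exact .inl fun a ha => by simp [h.eq_add_smul hj ha, h1]
  · exact .inr fun a ha => by simp [h.eq_add_smul hj ha, h2]

lemma l1VarOn_comp_le (h : IsEdgeTraversal pln k u) (hk : 0 < k) (π : Conf →ₗ[ℝ] ℝ × ℝ) :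
    l1VarOn (π ∘ pln) (Icc 0 1) ≤
      ∑ j ∈ Finset.range k, ENNReal.ofReal (l1 (π (u (j + 1)) - π (u j))) := by
  have hk' : (0 : ℝ) < k := Nat.cast_pos.2 hk
  have hsplit :=
    eVariationOn.sum' (fun a => WithLp.toLp 1 (π (pln a))) (monotone_natCast_div k) (n := k)
  simp only [Nat.cast_zero, zero_div, div_self hk'.ne', Nat.cast_add, Nat.cast_one] at hsplit
  refine hsplit.symm.le.trans (Finset.sum_le_sum fun j hj => ?_)
  have hj := Finset.mem_range.1 hj
  refine (l1VarOn_le_of_eq_add_smul (γ := π ∘ pln) (p := π (pln (j / k)))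
    (v := (k : ℝ) • π (u (j + 1) - u j)) (by gcongr; linarith) fun a ha => ?_).trans_eq ?_
  · rw [Function.comp_apply, h.eq_add_smul hj ha, map_add, map_smul, map_smul]
  · rw [← sub_div, add_sub_cancel_left, l1_smul, abs_of_pos hk', map_sub, ← mul_assoc,
      one_div_mul_cancel hk'.ne', one_mul]

lemma planCost_le (h : IsEdgeTraversal pln k u) (hk : 0 < k) :
    planCost pln ≤ ENNReal.ofReal (graphPathWeight k u) := by
  rw [ofReal_graphPathWeight]
  exact add_le_add (h.l1VarOn_comp_le hk (.fst ℝ (ℝ × ℝ) (ℝ × ℝ)))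
    (h.l1VarOn_comp_le hk (.snd ℝ (ℝ × ℝ) (ℝ × ℝ)))

end IsEdgeTraversal
/-! ### Optimal plans -/

lemma MovePath.exists_plan {F : Set (ℝ × ℝ)} {s t : Conf} {d : ℝ}
    (h : MovePath {c | FreeConf F c} s t d) :
    ∃ pln, IsPlan s t pln ∧ Feasible F pln ∧ planCost pln ≤ ENNReal.ofReal d ∧
      IsRectilinearPlan pln ∧ IsDecoupled pln := by
  obtain ⟨k, u, hk, rfl, rfl, hmove, rfl⟩ := h.exists_seq
  obtain ⟨pln, hcont, htrav⟩ := exists_continuous_isEdgeTraversal u k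
  exact ⟨pln, ⟨hcont.continuousOn, htrav.apply_zero hk, htrav.apply_one hk⟩,
    htrav.feasible hk hmove, htrav.planCost_le hk, htrav.isRectilinearPlan hk hmove,
    htrav.isDecoupled hk hmove⟩

lemma IsLinkedChain.movePath {𝒞 : Set (Set Conf)} (h𝒞 : ∀ C ∈ 𝒞, IsGeodesicCell C) {n : ℕ}
    {x y : Conf} {p : ℕ → Conf} (hp : IsLinkedChain 𝒞 n x y p) :
    MovePath (⋃₀ 𝒞) x y (graphPathWeight n p) := by
  obtain ⟨rfl, hlast, hlink⟩ := hp
  rw [← hlast n le_rfl]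
  clear hlast
  induction n with
  | zero =>
    obtain ⟨C, hC, h0, -⟩ := hlink 0
    exact .refl (mem_sUnion_of_mem h0 hC)
  | succ n ih =>
    obtain ⟨C, hC, hn, hn'⟩ := hlink n
    rw [graphPathWeight, Finset.sum_range_succ]
    exact ih.trans (((h𝒞 C hC).2 _ hn _ hn').mono (subset_sUnion_of_mem hC))

lemma dist_le_confDist (u v : Conf) : dist u v ≤ confDist u v := by
  simp only [Prod.dist_eq, Real.dist_eq, confDist, l1, Prod.fst_sub, Prod.snd_sub,
    abs_sub_comm (u.1.1), abs_sub_comm (u.1.2), abs_sub_comm (u.2.1), abs_sub_comm (u.2.2)]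
  exact max_le
    ((max_le_add_of_nonneg (abs_nonneg _) (abs_nonneg _)).trans
      (le_add_of_nonneg_right (l1_nonneg (v.2 - u.2))))
    ((max_le_add_of_nonneg (abs_nonneg _) (abs_nonneg _)).trans
      (le_add_of_nonneg_left (l1_nonneg (v.1 - u.1))))

lemma continuous_uncurry_confDist : Continuous (Function.uncurry confDist) := by
  unfold Function.uncurry confDist l1
  fun_prop

theorem exists_optimal_rectilinear_decoupled_plan_general {F : Set (ℝ × ℝ)} (hF : IsBoxUnion F)
    (hFc : IsClosed F) {s t : Conf} (hreach : ∃ pln, IsPlan s t pln ∧ Feasible F pln) :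
    ∃ pln, IsOptimalPlan F s t pln ∧ IsRectilinearPlan pln ∧ IsDecoupled pln := by
  obtain ⟨𝒞, hfin, hcell, hfree⟩ := exists_finite_geodesicCells hF hFc
  have hclosed : ∀ C ∈ 𝒞, IsClosed C := fun C hC => (hcell C hC).1
  have exists_chain_le_cost : ∀ pln, IsPlan s t pln → Feasible F pln →
      ∃ p, IsLinkedChain 𝒞 𝒞.ncard s t p ∧
        ENNReal.ofReal (graphPathWeight 𝒞.ncard p) ≤ planCost pln := by
    rintro pln ⟨hcont, rfl, rfl⟩ hfeas
    obtain ⟨τ, hτ, hmem, hchain⟩ := exists_isLinkedChain_comp hfin hclosed zero_le_one hcont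
      fun a ha => hfree.subset (hfeas a ha)
    exact ⟨pln ∘ τ, hchain, ofReal_graphPathWeight_comp_le_planCost pln hτ hmem _⟩
  obtain ⟨p, hp, hmin⟩ : ∃ p, IsLinkedChain 𝒞 𝒞.ncard s t p ∧
      ∀ p', IsLinkedChain 𝒞 𝒞.ncard s t p' →
        graphPathWeight 𝒞.ncard p ≤ graphPathWeight 𝒞.ncard p' := by
    obtain ⟨pln, hpln, hfeas⟩ := hreach
    obtain ⟨p, hp, -⟩ := exists_chain_le_cost pln hpln hfeas
    exact exists_isLinkedChain_forall_sum_le hfin hclosed continuous_uncurry_confDist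
      dist_le_confDist ⟨p, hp⟩
  obtain ⟨pln, hpln, hfeas, hcost, hrect, hdec⟩ := (hfree ▸ hp.movePath hcell).exists_plan
  refine ⟨pln, ⟨hpln, hfeas, fun pln' hpln' hfeas' => ?_⟩, hrect, hdec⟩
  obtain ⟨p', hp', hcost'⟩ := exists_chain_le_cost pln' hpln' hfeas'
  exact hcost.trans ((ENNReal.ofReal_le_ofReal (hmin p' hp')).trans hcost')

/-- For a rectilinear polygonal environment and a reachable pair of free
configurations, there exists an optimal `(s,t)`-plan that is rectilinear and decoupled. -/
theorem exists_optimal_rectilinear_decoupled_plan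
    (W : Set (ℝ × ℝ)) (hW : IsRectilinearEnv W)
    (F : Set (ℝ × ℝ)) (hF : F = freeSpace W)
    (s t : (ℝ × ℝ) × (ℝ × ℝ))
    (hs : FreeConf F s) (ht : FreeConf F t)
    (hreach : ∃ pln, IsPlan s t pln ∧ Feasible F pln) :
    ∃ pln, IsOptimalPlan F s t pln ∧ IsRectilinearPlan pln ∧ IsDecoupled pln := by
  subst hF
  exact exists_optimal_rectilinear_decoupled_plan_general hW.isBoxUnion.freeSpace
    (isClosed_freeSpace hW.2.1.isClosed) hreach

end
end

section
/- Let W be a rectilinear polygonal environment with free space F and fix points s_A,s_B,t_A,t_B ∈ F. For every edge (u,v) of the configuration graph 𝒢, the straight line segment from u to v in ℝ⁴ is contained in the 4-dimensional free space 𝐅. -/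
open Set
open scoped ENNReal

noncomputable section

/-!
Only one robot moves along an edge of the configuration graph, and it moves along a grid edge `pq`
while the other one is parked at a grid point `b`. If `pq` is horizontal, its relative interior
does not meet the vertical line through `b`, since it would do so in a grid point. Hence `b` does
not lie strictly between `p` and `q` in the horizontal direction, and the ℓ∞ distance to `b` on
`pq` is minimal at an endpoint.
-/

section Segment

lemma min_abs_sub_le_abs_sub_of_mem_segment {𝕜 : Type*} [Field 𝕜] [LinearOrder 𝕜]
    [IsStrictOrderedRing 𝕜] {p q b x : 𝕜} (hx : x ∈ segment 𝕜 p q)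
    (hb : b ∉ openSegment 𝕜 p q) : min |b - p| |b - q| ≤ |b - x| := by
  wlog hpq : p ≤ q generalizing p q
  · rw [min_comm]
    exact this (segment_symm 𝕜 p q ▸ hx) (openSegment_symm 𝕜 p q ▸ hb) (le_of_not_ge hpq)
  rw [segment_eq_Icc hpq] at hx
  have b_outside : b ≤ p ∨ q ≤ b := by
    by_contra! hlt
    exact hb (Ioo_subset_openSegment hlt)
  simp only [abs_sub_comm b]
  rcases b_outside with hbp | hqb
  · exact min_le_of_left_le (abs_sub_left_of_mem_uIcc (mem_uIcc_of_le hbp hx.1))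
  · exact min_le_of_right_le (abs_sub_left_of_mem_uIcc (mem_uIcc_of_ge hx.2 hqb))

variable {E : Type*} [AddCommGroup E] [Module ℝ E] [PseudoMetricSpace E]

lemma min_dist_le_dist_of_mem_segment_left {x₁ x₂ : ℝ} {y : E} {b c : ℝ × E}
    (hc : c ∈ segment ℝ (x₁, y) (x₂, y)) (hb : (b.1, y) ∉ openSegment ℝ (x₁, y) (x₂, y)) :
    min (dist b (x₁, y)) (dist b (x₂, y)) ≤ dist b c := by
  rw [← Prod.image_mk_segment_left] at hc
  rw [← Prod.image_mk_openSegment_left] at hb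
  obtain ⟨x, hx, rfl⟩ := hc
  simp only [Prod.dist_eq, Real.dist_eq, ← max_min_distrib_right]
  exact max_le_max_right _
    (min_abs_sub_le_abs_sub_of_mem_segment hx fun h ↦ hb (mem_image_of_mem _ h))

lemma min_dist_le_dist_of_mem_segment_right {x : E} {y₁ y₂ : ℝ} {b c : E × ℝ}
    (hc : c ∈ segment ℝ (x, y₁) (x, y₂)) (hb : (x, b.2) ∉ openSegment ℝ (x, y₁) (x, y₂)) :
    min (dist b (x, y₁)) (dist b (x, y₂)) ≤ dist b c := by
  rw [← Prod.image_mk_segment_right] at hc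
  rw [← Prod.image_mk_openSegment_right] at hb
  obtain ⟨y, hy, rfl⟩ := hc
  simp only [Prod.dist_eq, Real.dist_eq, ← max_min_distrib_left]
  exact max_le_max_left _
    (min_abs_sub_le_abs_sub_of_mem_segment hy fun h ↦ hb (mem_image_of_mem _ h))

end Segment

lemma linf_sub_eq_dist (p q : ℝ × ℝ) : linf (p - q) = dist p q := rfl

section Grid

variable {F P : Set (ℝ × ℝ)}

lemma IsGridPoint.mk_fst_snd {p q : ℝ × ℝ} (hp : IsGridPoint F P p) (hq : IsGridPoint F P q)
    (hF : (p.1, q.2) ∈ F) : IsGridPoint F P (p.1, q.2) :=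
  ⟨hF, hq.2.1, hp.2.2⟩

lemma IsGridEdge.min_dist_le_dist {p q b c : ℝ × ℝ} (hpq : IsGridEdge F P p q)
    (hb : IsGridPoint F P b) (hc : c ∈ segment ℝ p q) : min (dist b p) (dist b q) ≤ dist b c := by
  obtain ⟨hp, -, axis_parallel, segment_subset, no_grid_point⟩ := hpq
  have mem_F {w : ℝ × ℝ} (hw : w ∈ openSegment ℝ p q) : w ∈ F :=
    segment_subset (openSegment_subset_segment ℝ p q hw)
  obtain ⟨p₁, p₂⟩ := p
  obtain ⟨q₁, q₂⟩ := q
  rcases axis_parallel with rfl | rfl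
  · exact min_dist_le_dist_of_mem_segment_right hc
      fun h ↦ no_grid_point _ h (hp.mk_fst_snd hb (mem_F h))
  · exact min_dist_le_dist_of_mem_segment_left hc
      fun h ↦ no_grid_point _ h (hb.mk_fst_snd hp (mem_F h))

theorem confEdge_segment_subset_freeSpace_general {u v : (ℝ × ℝ) × (ℝ × ℝ)}
    (huv : ConfEdge F P u v) : ∀ c ∈ segment ℝ u v, FreeConf F c := by
  obtain ⟨u₁, u₂⟩ := u
  obtain ⟨v₁, v₂⟩ := v
  obtain ⟨⟨hu₁, hu₂, hu⟩, ⟨-, -, hv⟩, ⟨rfl, he⟩ | ⟨rfl, he⟩⟩ := huv <;>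
    rw [linf_sub_eq_dist] at hu hv
  · rw [← Prod.image_mk_segment_right]
    rintro _ ⟨x, hx, rfl⟩
    have separated : 1 ≤ dist u₁ x := (le_min hu hv).trans (he.min_dist_le_dist hu₁ hx)
    exact ⟨hu₁.1, he.2.2.2.1 hx, separated.trans_eq (linf_sub_eq_dist u₁ x).symm⟩
  · rw [← Prod.image_mk_segment_left]
    rintro _ ⟨x, hx, rfl⟩
    have separated : 1 ≤ dist x u₂ := by
      rw [dist_comm] at hu hv ⊢
      exact (le_min hu hv).trans (he.min_dist_le_dist hu₂ hx)
    exact ⟨he.2.2.2.1 hx, hu₂.1, separated.trans_eq (linf_sub_eq_dist x u₂).symm⟩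

end Grid

/-- For every edge `(u,v)` of the configuration graph, the straight
segment from `u` to `v` in `ℝ⁴` lies in the 4-dimensional free space. -/
theorem confEdge_segment_subset_freeSpace
    (W : Set (ℝ × ℝ)) (hW : IsRectilinearEnv W)
    (F : Set (ℝ × ℝ)) (hF : F = freeSpace W)
    (sA sB tA tB : ℝ × ℝ)
    (P : Set (ℝ × ℝ)) (hP : P = {sA, sB, tA, tB})
    (hsA : sA ∈ F) (hsB : sB ∈ F) (htA : tA ∈ F) (htB : tB ∈ F)
    (u v : (ℝ × ℝ) × (ℝ × ℝ)) (huv : ConfEdge F P u v) :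
    ∀ c ∈ segment ℝ u v, FreeConf F c := by
  exact confEdge_segment_subset_freeSpace_general huv

end
end

section
/- Let W ⊆ ℝ² be a closed set and let F be its free space. Then: (i) for every horizontal or vertical line ℓ, every connected component of ℓ \ F has diameter strictly greater than 1 (in particular, every bounded component has length greater than 1); and (ii) for all points p, q ∈ F with p and q differing in only one coordinate (the segment pq is axis-parallel) and with distance at most 1, the closed segment from p to q is contained in F. -/
open Set
open scoped ENNReal

noncomputable section

/-!
The sup-norm ball of radius `1/2` is the unit square, so the free space is the erosion of `W` by
that ball, and since balls of a product are products of balls, every axis-parallel slice of this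
erosion is itself the erosion of a closed set `V ⊆ ℝ`. Both claims thereby become one-dimensional.
A point outside the erosion of `V` by radius `r` is within `r` of a point `w ∉ V`; as `Vᶜ` is open,
a whole ball around `w` of radius larger than `r` misses the erosion, so the component has diameter
larger than `2r`. If `x` lies between `a` and `b` with `|a - b| ≤ 2r`, the ball around `x` is
covered by those around `a` and `b`.
-/

open Metric

/-- The erosion of `W` by the closed ball of radius `r` (morphological erosion): the centers of the
closed `r`-balls contained in `W`. -/
def erosion {X : Type*} [PseudoMetricSpace X] (r : ℝ) (W : Set X) : Set X :=
  {x | closedBall x r ⊆ W}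

lemma freeSpace_eq_erosion (W : Set (ℝ × ℝ)) : freeSpace W = erosion (1 / 2) W := by
  ext p
  refine ⟨fun hp w hw ↦ ?_, fun hp q hq ↦ hp ?_⟩
  · simpa using hp (w - p) (mem_closedBall_iff_norm.1 hw)
  · rw [mem_closedBall_iff_norm, add_sub_cancel_left]
    exact hq

lemma exists_ball_subset_compl_erosion {E : Type*} [SeminormedAddCommGroup E] [NormedSpace ℝ E]
    {r : ℝ} {V : Set E} {x : E} (hV : IsClosed V) (hx : x ∉ erosion r V) :
    ∃ w R, r < R ∧ x ∈ ball w R ∧ ball w R ⊆ (erosion r V)ᶜ := by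
  obtain ⟨w, hwx, hwV⟩ := not_subset.1 hx
  obtain ⟨ε, hε, hwε⟩ := isOpen_iff.1 hV.isOpen_compl w hwV
  have hr : 0 ≤ r := dist_nonneg.trans hwx
  refine ⟨w, r + ε, by linarith, ?_, fun y hy hyV ↦ ?_⟩
  · rw [mem_ball']
    exact (mem_closedBall.1 hwx).trans_lt (by linarith)
  · obtain ⟨v, hyv, hvw⟩ := exists_dist_le_lt hr hε (add_comm r ε ▸ mem_ball.1 hy)
    exact hwε hvw (hyV (mem_closedBall'.2 hyv))

lemma lt_ediam_connectedComponentIn_compl_erosion {E : Type*} [NormedAddCommGroup E]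
    [NormedSpace ℝ E] [Nontrivial E] {r : ℝ} {V : Set E} {x : E} (hV : IsClosed V)
    (hx : x ∉ erosion r V) :
    ENNReal.ofReal (2 * r) < ediam (connectedComponentIn (erosion r V)ᶜ x) := by
  obtain ⟨w, R, hrR, hxw, hw⟩ := exists_ball_subset_compl_erosion hV hx
  have hR : 0 < R := pos_of_mem_ball hxw
  calc ENNReal.ofReal (2 * r) < ENNReal.ofReal (2 * R) := by
        rw [ENNReal.ofReal_lt_ofReal_iff] <;> linarith
    _ = ediam (ball w R) := by
        rw [← diam_ball_eq w hR.le, diam, ENNReal.ofReal_toReal isBounded_ball.ediam_ne_top]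
    _ ≤ ediam (connectedComponentIn (erosion r V)ᶜ x) :=
        ediam_mono ((convex_ball w R).isPreconnected.subset_connectedComponentIn hxw hw)

lemma closedBall_subset_union_of_mem_segment {a b x r : ℝ} (hx : x ∈ segment ℝ a b)
    (hab : dist a b ≤ 2 * r) : closedBall x r ⊆ closedBall a r ∪ closedBall b r := by
  wlog h : a ≤ b generalizing a b
  · rw [union_comm]
    exact this (segment_symm ℝ a b ▸ hx) (dist_comm a b ▸ hab) (le_of_not_ge h)
  rw [segment_eq_Icc h] at hx
  rw [dist_comm, Real.dist_eq, abs_of_nonneg (sub_nonneg.2 h)] at hab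
  simp only [Real.closedBall_eq_Icc]
  rintro w ⟨hwl, hwu⟩
  obtain hwa | hwa := le_total w (a + r)
  · exact .inl ⟨by linarith [hx.1], hwa⟩
  · exact .inr ⟨by linarith, by linarith [hx.2]⟩

lemma segment_subset_erosion {r a b : ℝ} {V : Set ℝ} (ha : a ∈ erosion r V) (hb : b ∈ erosion r V)
    (hab : dist a b ≤ 2 * r) : segment ℝ a b ⊆ erosion r V :=
  fun _ hx ↦ (closedBall_subset_union_of_mem_segment hx hab).trans (union_subset ha hb)

section Prod

variable {X Y : Type*} [PseudoMetricSpace X] [PseudoMetricSpace Y]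

lemma isometry_prodMk_right (y : Y) : Isometry fun x : X ↦ (x, y) := fun a b ↦ by
  simp [Prod.edist_eq]

lemma isometry_prodMk_left (x : X) : Isometry fun y : Y ↦ (x, y) := fun a b ↦ by
  simp [Prod.edist_eq]

lemma preimage_prodMk_right_erosion (r : ℝ) (W : Set (X × Y)) (y : Y) :
    (fun x ↦ (x, y)) ⁻¹' erosion r W =
      erosion r (⋂ y' ∈ closedBall y r, (fun x ↦ (x, y')) ⁻¹' W) := by
  ext x
  change closedBall (x, y) r ⊆ W ↔ closedBall x r ⊆ ⋂ y' ∈ closedBall y r, (fun x ↦ (x, y')) ⁻¹' W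
  rw [← closedBall_prod_same, prod_subset_iff, subset_iInter₂_iff]
  exact forall₂_comm

lemma preimage_prodMk_left_erosion (r : ℝ) (W : Set (X × Y)) (x : X) :
    (fun y ↦ (x, y)) ⁻¹' erosion r W =
      erosion r (⋂ x' ∈ closedBall x r, (fun y ↦ (x', y)) ⁻¹' W) := by
  ext y
  change closedBall (x, y) r ⊆ W ↔ closedBall y r ⊆ ⋂ x' ∈ closedBall x r, (fun y ↦ (x', y)) ⁻¹' W
  rw [← closedBall_prod_same, prod_subset_iff, subset_iInter₂_iff]
  rfl

end Prod

lemma ediam_connectedComponentIn_preimage_le {X Y : Type*} [PseudoEMetricSpace X]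
    [PseudoEMetricSpace Y] {f : X → Y} (hf : Isometry f) {S : Set Y} {x : X} (hx : f x ∈ S) :
    ediam (connectedComponentIn (f ⁻¹' S) x) ≤ ediam (connectedComponentIn S (f x)) := by
  rw [← hf.ediam_image]
  refine ediam_mono ((hf.continuous.continuousOn.image_connectedComponentIn_subset hx).trans ?_)
  exact connectedComponentIn_mono _ (image_preimage_subset f S)

lemma lt_ediam_connectedComponentIn_of_preimage_eq_compl_erosion {E Z : Type*}
    [NormedAddCommGroup E] [NormedSpace ℝ E] [Nontrivial E] [PseudoEMetricSpace Z] {r : ℝ}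
    {f : E → Z} (hf : Isometry f) {S : Set Z} {V : Set E} (hV : IsClosed V)
    (hS : f ⁻¹' S = (erosion r V)ᶜ) {x : E} (hx : f x ∈ S) :
    ENNReal.ofReal (2 * r) < ediam (connectedComponentIn S (f x)) := by
  have hxV : x ∈ (erosion r V)ᶜ := hS ▸ hx
  calc ENNReal.ofReal (2 * r)
      < ediam (connectedComponentIn (erosion r V)ᶜ x) :=
        lt_ediam_connectedComponentIn_compl_erosion hV hxV
    _ = ediam (connectedComponentIn (f ⁻¹' S) x) := by rw [hS]
    _ ≤ ediam (connectedComponentIn S (f x)) := ediam_connectedComponentIn_preimage_le hf hx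

section AxisParallelLines

variable {E Y : Type*} [NormedAddCommGroup E] [NormedSpace ℝ E] [Nontrivial E]
  [PseudoMetricSpace Y] {r : ℝ}

lemma lt_ediam_connectedComponentIn_horizontal_diff_erosion {W : Set (E × Y)} (hW : IsClosed W)
    {c : Y} {z : E × Y} (hz : z ∈ {p : E × Y | p.2 = c} \ erosion r W) :
    ENNReal.ofReal (2 * r) <
      ediam (connectedComponentIn ({p : E × Y | p.2 = c} \ erosion r W) z) := by
  obtain ⟨x, y⟩ := z
  obtain rfl : y = c := hz.1
  refine lt_ediam_connectedComponentIn_of_preimage_eq_compl_erosion (isometry_prodMk_right y)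
    (V := ⋂ y' ∈ closedBall y r, (fun x ↦ (x, y')) ⁻¹' W)
    (isClosed_biInter fun y' _ ↦ hW.preimage (by fun_prop)) ?_ hz
  rw [← preimage_prodMk_right_erosion]
  ext
  simp

lemma lt_ediam_connectedComponentIn_vertical_diff_erosion {W : Set (Y × E)} (hW : IsClosed W)
    {c : Y} {z : Y × E} (hz : z ∈ {p : Y × E | p.1 = c} \ erosion r W) :
    ENNReal.ofReal (2 * r) <
      ediam (connectedComponentIn ({p : Y × E | p.1 = c} \ erosion r W) z) := by
  obtain ⟨y, x⟩ := z
  obtain rfl : y = c := hz.1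
  refine lt_ediam_connectedComponentIn_of_preimage_eq_compl_erosion (isometry_prodMk_left y)
    (V := ⋂ y' ∈ closedBall y r, (fun x ↦ (y', x)) ⁻¹' W)
    (isClosed_biInter fun y' _ ↦ hW.preimage (by fun_prop)) ?_ hz
  rw [← preimage_prodMk_left_erosion]
  ext
  simp

end AxisParallelLines

section AxisParallelSegments

variable {E : Type*} [SeminormedAddCommGroup E] [NormedSpace ℝ E] {r a b : ℝ}

lemma horizontal_segment_subset_erosion {W : Set (ℝ × E)} {y : E} (ha : (a, y) ∈ erosion r W)
    (hb : (b, y) ∈ erosion r W) (hab : dist a b ≤ 2 * r) :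
    segment ℝ (a, y) (b, y) ⊆ erosion r W := by
  have hslice := preimage_prodMk_right_erosion r W y
  rw [← Prod.image_mk_segment_left, image_subset_iff, hslice]
  exact segment_subset_erosion (hslice.subset ha) (hslice.subset hb) hab

lemma vertical_segment_subset_erosion {W : Set (E × ℝ)} {x : E} (ha : (x, a) ∈ erosion r W)
    (hb : (x, b) ∈ erosion r W) (hab : dist a b ≤ 2 * r) :
    segment ℝ (x, a) (x, b) ⊆ erosion r W := by
  have hslice := preimage_prodMk_left_erosion r W x
  rw [← Prod.image_mk_segment_right, image_subset_iff, hslice]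
  exact segment_subset_erosion (hslice.subset ha) (hslice.subset hb) hab

end AxisParallelSegments

/-- For a closed workspace `W` with free space `F`: (i) every connected
component of `ℓ \ F`, for an axis-parallel line `ℓ`, has diameter strictly greater
than `1`; and (ii) any axis-parallel segment of length at most `1` with both endpoints in
`F` is contained in `F`. -/
theorem freeSpace_line_components_and_segments
    (W : Set (ℝ × ℝ)) (hW : IsClosed W)
    (F : Set (ℝ × ℝ)) (hF : F = freeSpace W) :
    (∀ L : Set (ℝ × ℝ),
        (∃ c : ℝ, L = {p : ℝ × ℝ | p.2 = c} ∨ L = {p : ℝ × ℝ | p.1 = c}) →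
        ∀ z ∈ L \ F, 1 < EMetric.diam (connectedComponentIn (L \ F) z)) ∧
    (∀ p q : ℝ × ℝ, p ∈ F → q ∈ F → (p.1 = q.1 ∨ p.2 = q.2) → l1 (p - q) ≤ 1 →
        segment ℝ p q ⊆ F) := by
  subst hF
  rw [freeSpace_eq_erosion]
  have hdiam : ENNReal.ofReal (2 * (1 / 2)) = 1 := by norm_num
  refine ⟨?_, ?_⟩
  · rintro L ⟨c, rfl | rfl⟩ z hz
    · exact hdiam ▸ lt_ediam_connectedComponentIn_horizontal_diff_erosion hW hz
    · exact hdiam ▸ lt_ediam_connectedComponentIn_vertical_diff_erosion hW hz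
  · rintro ⟨a, b⟩ ⟨a', b'⟩ hp hq (rfl | rfl) hdist
    · exact vertical_segment_subset_erosion hp hq (by simpa [l1, Real.dist_eq] using hdist)
    · exact horizontal_segment_subset_erosion hp hq (by simpa [l1, Real.dist_eq] using hdist)

end
end
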